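/- Let G be a set equipped with functions deg: G → ℤ and a symmetric function loc: G × G → ℤ. Suppose that for every finite tuple a = (a₁,…,a_l) of elements of G we are given a k-linear subspace Ω^{a} ⊆ Φ^l such that: (Ω0) Ω^{()} = k and Ω^{(a)} = k[z] for every a ∈ G; (Ω1) every α ∈ Ω^{a} satisfies ord_{ij}α ≥ −loc(a_i,a_j) for all 1 ≤ i < j ≤ l; (Ω2) Ω^{a} = σΩ^{σa} for every permutation σ of {1,…,l}, where (σα)(z₁,…,z_l) = α(z_{σ(1)},…,z_{σ(l)}) and σa = (a_{σ(1)},…,a_{σ(l)}); (Ω3) Ω^{a} is closed under the operators Δ = Σ_i ∂_{z_i} and Δ*(2·deg a₁,…,2·deg a_l) = Σ_i (z_i²∂_{z_i} + 2(deg a_i)z_i); (Ω4) for every α ∈ Ω^{a}, in the Laurent expansion α(z₁,…,z_l) = Σ_{n≥n₀} z₁^{−n−1}·α_n(z₂,…,z_l) of α at z₁ = ∞, every coefficient α_n lies in Ω^{(a₂,…,a_l)}. Then the following also holds: for every 1 ≤ k ≤ l and every α ∈ Ω^{(a₁,…,a_l)}, the expansion of α(z₁+z,…,z_k+z,z_{k+1},…,z_l)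 at z = ∞ has the form Σ_{n≥n₀} z^{−n−1}·Σ_i α'_{ni}(z₁,…,z_k)·α''_{ni}(z_{k+1},…,z_l), with finitely many terms i for each n, where α'_{ni} ∈ Ω^{(a₁,…,a_k)} and α''_{ni} ∈ Ω^{(a_{k+1},…,a_l)}. -/

import Mathlib

open scoped Classical

noncomputable section

namespace Griess

open MvPolynomial

variable {k : Type} [Field k]

/-- The field `k(z₁,…,z_l)` of rational functions over `k` in `l` variables. -/
abbrev RF (k : Type) [Field k] (l : ℕ) : Type := FractionRing (MvPolynomial (Fin l) k)

/-- The variable `zᵢ` as an element of the rational function field. -/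
def zv {k : Type} [Field k] {l : ℕ} (i : Fin l) : RF k l :=
  algebraMap (MvPolynomial (Fin l) k) (RF k l) (MvPolynomial.X i)

/-- The space `Φ^l` of rational functions of the form
`p(z₁,…,z_l) · ∏_{i<j} (zᵢ - z_j)^{k_{ij}}`. -/
def Phi (k : Type) [Field k] (l : ℕ) : Set (RF k l) :=
  { x | ∃ (p : MvPolynomial (Fin l) k) (e : Fin l → Fin l → ℤ),
      x = algebraMap (MvPolynomial (Fin l) k) (RF k l) p *
        ∏ i : Fin l, ∏ j : Fin l, (if i < j then (zv i - zv j) ^ e i j else 1) }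

/-- `D` is the family of partial derivative operators `∂_{z₁},…,∂_{z_l}`:
a family of `k`-linear derivations with `D i (z j) = δ_{ij}`. -/
def IsPartialDeriv {l : ℕ} (D : Fin l → Derivation k (RF k l) (RF k l)) : Prop :=
  ∀ i j : Fin l, D i (zv j) = if j = i then 1 else 0

/-- The operator `Δ = Σᵢ ∂_{zᵢ}`. -/
def Delta {l : ℕ} (D : Fin l → Derivation k (RF k l) (RF k l)) (α : RF k l) : RF k l :=
  ∑ i, D i α

/-- The operator `Δ*(n₁,…,n_l) = Σᵢ (zᵢ² ∂_{zᵢ} + nᵢ zᵢ)`. -/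
def DeltaStar {l : ℕ} (D : Fin l → Derivation k (RF k l) (RF k l)) (n : Fin l → ℤ)
    (α : RF k l) : RF k l :=
  ∑ i, ((zv i) ^ 2 * D i α + (n i : RF k l) * zv i * α)

section Subst

variable {l : ℕ}

/-- The embedding of polynomials in `z₁,…,z_l` into rational functions of
`z₁,…,z_l` and one extra variable `t` (`= RatFunc.X`). -/
def toRatFuncHom (k : Type) [Field k] (l : ℕ) :
    Polynomial (MvPolynomial (Fin l) k) →+* RatFunc (RF k l) :=
  (algebraMap (Polynomial (RF k l)) (RatFunc (RF k l))).comp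
    (Polynomial.mapRingHom (algebraMap (MvPolynomial (Fin l) k) (RF k l)))

lemma toRatFuncHom_injective : Function.Injective (toRatFuncHom k l) := by
  have h1 : Function.Injective (algebraMap (Polynomial (RF k l)) (RatFunc (RF k l))) :=
    IsFractionRing.injective _ _
  have h2 : Function.Injective
      (Polynomial.mapRingHom (algebraMap (MvPolynomial (Fin l) k) (RF k l))) :=
    Polynomial.map_injective _ (IsFractionRing.injective _ _)
  exact fun a b hab => h2 (h1 hab)

/-- Polynomial level substitution `z_j ↦ t·z_j` for `j ∈ J`. -/
def scaleAux (k : Type) [Field k] (l : ℕ) (J : Finset (Fin l)) :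
    MvPolynomial (Fin l) k →+* Polynomial (MvPolynomial (Fin l) k) :=
  (MvPolynomial.aeval (R := k) fun i =>
    if i ∈ J then Polynomial.X * Polynomial.C (MvPolynomial.X i)
    else Polynomial.C (MvPolynomial.X i)).toRingHom

lemma scaleAux_injective (J : Finset (Fin l)) :
    Function.Injective (scaleAux k l J) := by
  have h : (Polynomial.evalRingHom (1 : MvPolynomial (Fin l) k)).comp (scaleAux k l J)
      = RingHom.id _ := by
    apply MvPolynomial.ringHom_ext
    · intro r; simp [scaleAux]
    · intro i; by_cases hi : i ∈ J <;> simp [scaleAux, hi]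
  intro p q hpq
  have hp := DFunLike.congr_fun h p
  have hq := DFunLike.congr_fun h q
  simp only [RingHom.comp_apply, RingHom.id_apply] at hp hq
  rw [← hp, ← hq, hpq]

/-- The substitution `z_j ↦ t·z_j` (for `j ∈ J`), as a map from rational functions
in `z₁,…,z_l` to rational functions in `z₁,…,z_l` and `t`.  Reading off the
coefficients of the Laurent expansion in `t` at `t = 0` of `scaleJ J α` yields the
decomposition of `α` into its homogeneous components with respect to the total degree
in the variables `{z_j : j ∈ J}`, i.e. the expansion of `α` in the domain where the
variables of `J` are much smaller than the remaining variables. -/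
def scaleJ (J : Finset (Fin l)) : RF k l →+* RatFunc (RF k l) :=
  IsFractionRing.lift (g := (toRatFuncHom k l).comp (scaleAux k l J))
    (fun a b hab => scaleAux_injective J (toRatFuncHom_injective hab))

/-- Polynomial level substitution `z_i ↦ z_j + t`. -/
def subPairAux (k : Type) [Field k] (l : ℕ) (i j : Fin l) :
    MvPolynomial (Fin l) k →+* Polynomial (MvPolynomial (Fin l) k) :=
  (MvPolynomial.aeval (R := k) fun s =>
    if s = i then Polynomial.X + Polynomial.C (MvPolynomial.X j)
    else Polynomial.C (MvPolynomial.X s)).toRingHom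

lemma subPairAux_injective (i j : Fin l) :
    Function.Injective (subPairAux k l i j) := by
  have h : (Polynomial.evalRingHom (MvPolynomial.X i - MvPolynomial.X j)).comp
      (subPairAux k l i j) = RingHom.id _ := by
    apply MvPolynomial.ringHom_ext
    · intro r; simp [subPairAux]
    · intro s; by_cases hs : s = i <;> simp [subPairAux, hs]
  intro p q hpq
  have hp := DFunLike.congr_fun h p
  have hq := DFunLike.congr_fun h q
  simp only [RingHom.comp_apply, RingHom.id_apply] at hp hq
  rw [← hp, ← hq, hpq]

/-- The substitution `z_i ↦ z_j + t`, as a map from rational functions in `z₁,…,z_l`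
to rational functions in the variables `z₁,…,z_l` and `t`.  Reading off the Laurent
coefficients in `t` at `t = 0` yields the expansion of a rational function in powers
of `z_i - z_j`, with coefficients not involving `z_i`. -/
def subPair (i j : Fin l) : RF k l →+* RatFunc (RF k l) :=
  IsFractionRing.lift (g := (toRatFuncHom k l).comp (subPairAux k l i j))
    (fun a b hab => subPairAux_injective i j (toRatFuncHom_injective hab))

end Subst

/-- The coefficient of `tᵐ` in the Laurent expansion at `t = 0` of a rational
function of `t`. -/
def lcoeff {L : Type} [Field L] (m : ℤ) (f : RatFunc L) : L :=
  (f : LaurentSeries L).coeff m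

/-- The component `(α)_n` of `α` of degree `n` with respect to the partition
`{1,…,l} = Jᶜ ⊔ J` and the weights `d`:  the part of the expansion of `α` in the
domain where the variables of `J` are much smaller than those of `Jᶜ` whose total
degree in the variables `{z_j : j ∈ J}` equals `n - Σ_{j∈J} d_j`. -/
def component {l : ℕ} (J : Finset (Fin l)) (d : Fin l → ℤ) (n : ℤ) (α : RF k l) :
    RF k l :=
  lcoeff (n - ∑ j ∈ J, d j) (scaleJ J α)

/-- `α` is homogeneous of total degree `d` in the variables `{z_i : i ∈ S}`:
substituting `z_i ↦ t·z_i` for `i ∈ S` multiplies `α` by `t^d`. -/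
def IsHomogeneousOn {l : ℕ} (S : Finset (Fin l)) (d : ℤ) (α : RF k l) : Prop :=
  scaleJ S α = RatFunc.X ^ d * RatFunc.C α

/-- `ρ^{(m)}_{ij} α`: the coefficient of `(z_i - z_j)^m` in the expansion of `α`
in powers of `z_i - z_j` (the coefficients do not involve `z_i`). -/
def rho {l : ℕ} (i j : Fin l) (m : ℤ) (α : RF k l) : RF k l :=
  lcoeff m (subPair i j α)

/-- `α` is a rational function of the variables `{z_i : i ∈ S}` only. -/
def dependsOnlyOn {l : ℕ} (S : Finset (Fin l)) (α : RF k l) : Prop :=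
  α ∈ Subfield.closure (Set.range (algebraMap k (RF k l)) ∪ {x | ∃ i ∈ S, x = zv i})

/-- `α` is an admissible function of the variables `{z_i : i ∈ S}` (the space
`R^{|S|}`):  `α ∈ Φ` is a rational function of the variables of `S` only, it is
`(4,…,4)`-regular and homogeneous of degree `-2|S|` in these variables, and all its
components of negative degree, as well as those of degree `1`, vanish (with respect
to every partition of `S` and all weights equal to `2`). -/
def Admissible {l : ℕ} (D : Fin l → Derivation k (RF k l) (RF k l)) (S : Finset (Fin l))
    (α : RF k l) : Prop :=
  α ∈ Phi k l ∧ dependsOnlyOn S α ∧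
    (∑ i ∈ S, ((zv i) ^ 2 * D i α + 4 * zv i * α)) = 0 ∧
    IsHomogeneousOn S (-(2 * (S.card : ℤ))) α ∧
    ∀ J ⊆ S, ∀ n : ℤ, (n < 0 ∨ n = 1) → component J (fun _ => 2) n α = 0

/-- `α` is an indecomposable admissible function of the variables `{z_i : i ∈ S}`
(the space `R₀^{|S|}`): admissible, and all the components `(α)₀` with respect to
partitions of `S` into two nonempty parts vanish. -/
def AdmissibleInd {l : ℕ} (D : Fin l → Derivation k (RF k l) (RF k l))
    (S : Finset (Fin l)) (α : RF k l) : Prop :=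
  Admissible D S α ∧
    ∀ J ⊆ S, J ≠ ∅ → J ≠ S → component J (fun _ => 2) 0 α = 0

section Shift

variable {l : ℕ}

/-- Polynomial level substitution `z_s ↦ z_s - z_t` for `s ∈ S`. -/
def shiftAuxP (k : Type) [Field k] (l : ℕ) (S : Finset (Fin l)) (t : Fin l) :
    MvPolynomial (Fin l) k →+* MvPolynomial (Fin l) k :=
  (MvPolynomial.aeval (R := k) fun s =>
    if s ∈ S then MvPolynomial.X s - MvPolynomial.X t else MvPolynomial.X s).toRingHom

lemma shiftAuxP_injective (S : Finset (Fin l)) (t : Fin l) (ht : t ∉ S) :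
    Function.Injective (shiftAuxP k l S t) := by
  have h : ((MvPolynomial.aeval (R := k) fun s =>
      if s ∈ S then MvPolynomial.X s + MvPolynomial.X t
      else MvPolynomial.X s).toRingHom).comp (shiftAuxP k l S t) = RingHom.id _ := by
    apply MvPolynomial.ringHom_ext
    · intro r; simp [shiftAuxP]
    · intro s
      by_cases hs : s ∈ S
      · have hst : s ≠ t := fun hst => ht (hst ▸ hs)
        simp [shiftAuxP, hs, ht]
      · simp [shiftAuxP, hs]
  intro p q hpq
  have hp := DFunLike.congr_fun h p
  have hq := DFunLike.congr_fun h q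
  simp only [RingHom.comp_apply, RingHom.id_apply] at hp hq
  rw [← hp, ← hq, hpq]

/-- The shift operator substituting `z_s - z_t` for `z_s`, for all `s ∈ S`. -/
def shiftT (S : Finset (Fin l)) (t : Fin l) (ht : t ∉ S) : RF k l →+* RF k l :=
  IsFractionRing.lift
    (g := (algebraMap (MvPolynomial (Fin l) k) (RF k l)).comp (shiftAuxP k l S t))
    (fun a b hab =>
      shiftAuxP_injective S t ht (IsFractionRing.injective _ _ hab))

/-- The operator `ℰ = Σ_{s ∈ S} (-z_s⁻¹ ∂_{z_s} + 2 z_s⁻²)`. -/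
def curlyE {l : ℕ} (D : Fin l → Derivation k (RF k l) (RF k l)) (S : Finset (Fin l))
    (β : RF k l) : RF k l :=
  ∑ s ∈ S, (-((zv s)⁻¹ * D s β) + 2 * (zv s) ^ (-2 : ℤ) * β)

end Shift

end Griess

namespace Griess

set_option synthInstance.maxHeartbeats 1000000
set_option maxHeartbeats 2000000

/-- The embedding `k(z_{f(1)},…,z_{f(m)}) ⊆ k(z₁,…,z_l)` induced by an injection
`f : Fin m → Fin l` of variable indices. -/
def embMap {k : Type} [Field k] {m l : ℕ} (f : Fin m → Fin l)
    (hf : Function.Injective f) : RF k m →+* RF k l :=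
  IsFractionRing.lift
    (g := (algebraMap (MvPolynomial (Fin l) k) (RF k l)).comp
      (MvPolynomial.rename f).toRingHom)
    (by
      intro a b hab
      simp only [RingHom.comp_apply] at hab
      exact MvPolynomial.rename_injective f hf (IsFractionRing.injective _ _ hab))

/-- The action of a permutation `σ` on rational functions:
`(σα)(z₁,…,z_l) = α(z_{σ(1)},…,z_{σ(l)})`, i.e. the substitution `z_i ↦ z_{σ(i)}`
applied to the `i`-th variable slot of `α`. -/
def permHom {k : Type} [Field k] {l : ℕ} (σ : Equiv.Perm (Fin l)) :
    RF k l →+* RF k l :=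
  embMap σ σ.injective

/-!
Write `x` for the variables which are shifted and `y` for the other ones. After multiplication by
a function of `x`, an element `α` of `Ω` is regular enough at `x = ∞` for the coefficients of
its expansion under `x ↦ x + t` to be computed from the iterated expansions at `x₁ = ∞`,
`x₂ = ∞`, …, whose coefficients lie in `Ω^y` by (Ω4). Hence the coefficients of `α(x + t, y)` lie in
`k(x) · Ω^y`.

By (Ω2) the roles of `x` and `y` can be exchanged, so the coefficients of `α(x, y - t)` lie in
`Ω^x · k(y)`. The simultaneous translation of all variables is `exp(tΔ)`, which preserves `Ω` by
(Ω3) and is polynomial in `t` on `Φ`, because it fixes the differences `zᵢ - zⱼ`. Hence the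
coefficients of `α(x + t, y)` lie in `Ω^x · k(y)` as well.

Finally, `k(x)` and `k(y)` are linearly disjoint over `k`, so the intersection of these two spaces
is `Ω^x · Ω^y`.
-/

section Embeddings

variable {k : Type} [Field k] {m l n : ℕ}

theorem RF.ringHom_ext {R : Type*} [CommRing R] {f g : RF k l →+* R}
    (hzv : ∀ i, f (zv i) = g (zv i))
    (hconst : ∀ c : k, f (algebraMap k (RF k l) c) = g (algebraMap k (RF k l) c)) : f = g :=
  IsLocalization.ringHom_ext (nonZeroDivisors (MvPolynomial (Fin l) k))
    (MvPolynomial.ringHom_ext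
      (fun c => by simpa [IsScalarTower.algebraMap_apply k (MvPolynomial (Fin l) k) (RF k l)]
        using hconst c) hzv)

theorem zv_injective : Function.Injective (zv : Fin l → RF k l) :=
  (IsFractionRing.injective _ _).comp (MvPolynomial.X_injective (R := k))

theorem zv_ne_zero (i : Fin l) : (zv i : RF k l) ≠ 0 :=
  (map_ne_zero_iff _ (IsFractionRing.injective _ _)).2 (MvPolynomial.X_ne_zero i)

variable (f : Fin m → Fin l) (hf : Function.Injective f)

@[simp]
theorem embMap_algebraMap_mvPolynomial (p : MvPolynomial (Fin m) k) :
    embMap f hf (algebraMap _ _ p) =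
      algebraMap (MvPolynomial (Fin l) k) (RF k l) (MvPolynomial.rename f p) :=
  IsFractionRing.lift_algebraMap _ p

@[simp]
theorem embMap_zv (i : Fin m) : embMap (k := k) f hf (zv i) = zv (f i) := by
  simp [zv]

theorem embMap_inv_zv_sub_zv (i j : Fin m) :
    embMap (k := k) f hf (zv i - zv j)⁻¹ = (zv (f i) - zv (f j))⁻¹ := by
  simp

@[simp]
theorem embMap_algebraMap (c : k) :
    embMap f hf (algebraMap k _ c) = algebraMap k (RF k l) c := by
  simp [IsScalarTower.algebraMap_apply k (MvPolynomial (Fin m) k) (RF k m),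
    IsScalarTower.algebraMap_apply k (MvPolynomial (Fin l) k) (RF k l)]

theorem embMap_comp (g : Fin l → Fin n) (hg : Function.Injective g) :
    (embMap (k := k) g hg).comp (embMap f hf) = embMap (g ∘ f) (hg.comp hf) :=
  RF.ringHom_ext (by simp) (by simp)

theorem embMap_id : embMap (k := k) (id : Fin l → Fin l) Function.injective_id = RingHom.id _ :=
  RF.ringHom_ext (by simp) (by simp)

/-- The embedding `embMap f` as a homomorphism of `k`-algebras. -/
def embAlgHom (f : Fin m ↪ Fin l) : RF k m →ₐ[k] RF k l :=
  { embMap f f.injective with commutes' := embMap_algebraMap f f.injective }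

@[simp]
theorem embAlgHom_apply (f : Fin m ↪ Fin l) (x : RF k m) :
    embAlgHom f x = embMap f f.injective x := rfl

theorem map_embAlgHom (f : Fin m ↪ Fin l) (g : Fin l ↪ Fin n) (S : Submodule k (RF k m)) :
    (S.map (embAlgHom f).toLinearMap).map (embAlgHom g).toLinearMap =
      S.map (embAlgHom (f.trans g)).toLinearMap := by
  rw [← Submodule.map_comp]
  congr 1
  exact LinearMap.ext (RingHom.congr_fun (embMap_comp f f.injective g g.injective))

/-- The external product `S ⊠ T`: the span of the products of a function in `S` of the variables
`z_{f(i)}` and a function in `T` of the variables `z_{g(j)}`. -/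
def externalProduct {r : ℕ} (f : Fin m ↪ Fin l) (g : Fin r ↪ Fin l)
    (S : Submodule k (RF k m)) (T : Submodule k (RF k r)) : Submodule k (RF k l) :=
  S.map (embAlgHom f).toLinearMap * T.map (embAlgHom g).toLinearMap

theorem map_externalProduct {r : ℕ} (f : Fin m ↪ Fin l) (g : Fin r ↪ Fin l) (h : Fin l ↪ Fin n)
    (S : Submodule k (RF k m)) (T : Submodule k (RF k r)) :
    (externalProduct f g S T).map (embAlgHom h).toLinearMap =
      externalProduct (f.trans h) (g.trans h) S T := by
  rw [externalProduct, Submodule.map_mul, map_embAlgHom, map_embAlgHom, externalProduct]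

theorem Phi_subset_of_subring (R : Subring (RF k l)) (hconst : ∀ c, algebraMap k (RF k l) c ∈ R)
    (hzv : ∀ i, zv i ∈ R) (hinv : ∀ i j, i < j → (zv i - zv j : RF k l)⁻¹ ∈ R) :
    Phi k l ⊆ R := by
  rintro _ ⟨p, e, rfl⟩
  refine R.mul_mem ?_ (R.prod_mem fun i _ => R.prod_mem fun j _ => ?_)
  · induction p using MvPolynomial.induction_on with
    | C c =>
      rw [← MvPolynomial.algebraMap_eq, ← IsScalarTower.algebraMap_apply]
      exact hconst c
    | add p q hp hq => simpa only [map_add] using R.add_mem hp hq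
    | mul_X p i hp => simpa only [map_mul, zv] using R.mul_mem hp (hzv i)
  · split_ifs with hij
    · obtain ⟨n, hn | hn⟩ := Int.eq_nat_or_neg (e i j)
      · simpa only [hn, zpow_natCast] using R.pow_mem (R.sub_mem (hzv i) (hzv j)) n
      · simpa only [hn, zpow_neg, zpow_natCast, inv_pow] using R.pow_mem (hinv i j hij) n
    · exact R.one_mem

end Embeddings

section LaurentExpansions

open HahnSeries

/-- The ring homomorphism of Laurent series which applies `f` to every coefficient. -/
def laurentMap {A B : Type*} [CommRing A] [CommRing B] (f : A →+* B) :
    LaurentSeries A →+* LaurentSeries B where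
  toFun x := HahnSeries.map x f
  map_one' := HahnSeries.map_one f.toMonoidWithZeroHom
  map_zero' := HahnSeries.map_zero (f : ZeroHom A B)
  map_add' _ _ := HahnSeries.map_add (f : A →+ B)
  map_mul' _ _ := HahnSeries.map_mul (f : A →ₙ+* B)

section LaurentMap

variable {A B : Type*} [CommRing A] [CommRing B] (f : A →+* B)

@[simp]
theorem coeff_laurentMap (x : LaurentSeries A) (n : ℤ) :
    (laurentMap f x).coeff n = f (x.coeff n) :=
  HahnSeries.map_coeff x f n

@[simp]
theorem laurentMap_single (n : ℤ) (a : A) : laurentMap f (single n a) = single n (f a) :=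
  HahnSeries.map_single (f : ZeroHom A B)

@[simp]
theorem laurentMap_C (a : A) : laurentMap f (HahnSeries.C a) = HahnSeries.C (f a) :=
  laurentMap_single f 0 a

theorem orderTop_laurentMap {f : A →+* B} (hf : Function.Injective f) (x : LaurentSeries A) :
    (laurentMap f x).orderTop = x.orderTop := by
  refine le_antisymm ?_ ?_ <;> refine le_orderTop_iff_forall.2 fun n hn => ?_
  · exact (map_eq_zero_iff f hf).1
      ((coeff_laurentMap f x n).symm.trans (coeff_eq_zero_of_lt_orderTop hn))
  · simp [coeff_eq_zero_of_lt_orderTop hn]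

end LaurentMap

attribute [local instance] RatFunc.liftAlgebra in
/-- The expansion of rational functions of one variable at zero, as a ring homomorphism. -/
def ratFuncToLaurent (F : Type*) [Field F] : RatFunc F →+* LaurentSeries F :=
  algebraMap (RatFunc F) (LaurentSeries F)

section RatFuncToLaurent

variable {F : Type*} [Field F]

@[simp]
theorem ratFuncToLaurent_C (c : F) : ratFuncToLaurent F (RatFunc.C c) = HahnSeries.C c := by
  rw [ratFuncToLaurent, ← RatFunc.algebraMap_C, ← IsScalarTower.algebraMap_apply]
  simp

@[simp]
theorem ratFuncToLaurent_inv_X : ratFuncToLaurent F RatFunc.X⁻¹ = single (-1) 1 := by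
  rw [map_inv₀]
  exact (congrArg _ RatFunc.coe_X).trans (inv_single 1 1 |>.trans (by simp))

end RatFuncToLaurent

/-- The expansion at infinity of polynomials in one variable, as a ring homomorphism: the
variable of the Laurent series is the inverse of the variable of the polynomials. -/
def polynomialToLaurentAtInfty (F : Type*) [Field F] : Polynomial F →+* LaurentSeries F :=
  Polynomial.eval₂RingHom HahnSeries.C (single (-1) 1)

section PolynomialToLaurentAtInfty

variable {F : Type*} [Field F]

@[simp]
theorem polynomialToLaurentAtInfty_C (c : F) :
    polynomialToLaurentAtInfty F (Polynomial.C c) = HahnSeries.C c :=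
  Polynomial.eval₂_C _ _

@[simp]
theorem polynomialToLaurentAtInfty_X :
    polynomialToLaurentAtInfty F Polynomial.X = single (-1) 1 :=
  Polynomial.eval₂_X _ _

theorem coeff_polynomialToLaurentAtInfty (P : Polynomial F) (n : ℕ) :
    (polynomialToLaurentAtInfty F P).coeff (-n) = P.coeff n := by
  induction P using Polynomial.induction_on' with
  | add p q hp hq => simp [hp, hq]
  | monomial m a =>
    rw [← Polynomial.C_mul_X_pow_eq_monomial]
    simp [HahnSeries.C_apply, HahnSeries.coeff_single]

theorem polynomialToLaurentAtInfty_injective :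
    Function.Injective (polynomialToLaurentAtInfty F) := fun P Q h =>
  Polynomial.ext fun n => by simp only [← coeff_polynomialToLaurentAtInfty, h]

end PolynomialToLaurentAtInfty

variable {k : Type} [Field k]

section ExpandAtInfty

/-- The expansion of `α(z₁,…,z_{l+1})` at `z₁ = ∞`, as a Laurent series in `z₁⁻¹` whose
coefficients are rational functions of the remaining variables, renumbered as `z₁,…,z_l`. -/
def expandAtInfty (k : Type) [Field k] (l : ℕ) : RF k (l + 1) →+* LaurentSeries (RF k l) :=
  IsFractionRing.lift
    (g := ((polynomialToLaurentAtInfty (RF k l)).comp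
      (Polynomial.mapRingHom (algebraMap (MvPolynomial (Fin l) k) (RF k l)))).comp
        (MvPolynomial.finSuccEquiv k l).toRingEquiv.toRingHom)
    fun _ _ h => (MvPolynomial.finSuccEquiv k l).injective <|
      Polynomial.map_injective _ (IsFractionRing.injective _ _) <|
        polynomialToLaurentAtInfty_injective h

variable {l : ℕ}

@[simp]
theorem expandAtInfty_zv_zero : expandAtInfty k l (zv 0) = single (-1) 1 := by
  simp [expandAtInfty, zv, MvPolynomial.finSuccEquiv_X_zero]

@[simp]
theorem expandAtInfty_zv_succ (i : Fin l) :
    expandAtInfty k l (zv i.succ) = HahnSeries.C (zv i) := by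
  simp [expandAtInfty, zv, MvPolynomial.finSuccEquiv_X_succ]

@[simp]
theorem expandAtInfty_algebraMap (c : k) :
    expandAtInfty k l (algebraMap k _ c) = HahnSeries.C (algebraMap k _ c) := by
  simp [expandAtInfty, IsScalarTower.algebraMap_apply k (MvPolynomial (Fin (l + 1)) k) (RF k _),
    IsScalarTower.algebraMap_apply k (MvPolynomial (Fin l) k) (RF k l),
    MvPolynomial.finSuccEquiv_apply]

theorem expandAtInfty_embMap_succ (w : RF k l) :
    expandAtInfty k l (embMap Fin.succ (Fin.succ_injective l) w) = HahnSeries.C w :=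
  RingHom.congr_fun (f := (expandAtInfty k l).comp (embMap Fin.succ (Fin.succ_injective l)))
    (RF.ringHom_ext (by simp) (by simp)) w

theorem lcoeff_eq_embMap_coeff_expandAtInfty {E : RF k (l + 1) →+* RatFunc (RF k (l + 1))}
    (hE0 : E (zv 0) = RatFunc.X⁻¹)
    (hE1 : ∀ i : Fin l, E (zv i.succ) = RatFunc.C (zv (k := k) i.succ))
    (hEc : ∀ c : k, E (algebraMap k _ c) = RatFunc.C (algebraMap k _ c)) (α : RF k (l + 1))
    (n : ℤ) :
    lcoeff n (E α) = embMap Fin.succ (Fin.succ_injective l) ((expandAtInfty k l α).coeff n) :=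
  congrArg (HahnSeries.coeff · n) <|
    RingHom.congr_fun (f := (ratFuncToLaurent _).comp E)
      (g := (laurentMap (embMap Fin.succ (Fin.succ_injective l))).comp (expandAtInfty k l))
      (RF.ringHom_ext (Fin.cases (by simp [hE0, -map_inv₀]) (by simp [hE1])) (by simp [hEc])) α

end ExpandAtInfty

section Shift

variable {l : ℕ}

/-- The substitution `zᵢ ↦ zᵢ + vᵢ t`, followed by the expansion at `t = ∞` as a Laurent series
in `t⁻¹`. -/
def shift (v : Fin l → k) : RF k l →+* LaurentSeries (RF k l) :=
  IsFractionRing.lift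
    (g := (polynomialToLaurentAtInfty (RF k l)).comp
      (MvPolynomial.eval₂Hom (algebraMap k (Polynomial (RF k l))) fun i =>
        Polynomial.C (zv i) + Polynomial.C (algebraMap k _ (v i)) * Polynomial.X))
    (polynomialToLaurentAtInfty_injective.comp <|
      Function.Injective.of_comp (f := Polynomial.evalRingHom 0) <| by
        convert IsFractionRing.injective (MvPolynomial (Fin l) k) (RF k l)
        rw [← RingHom.coe_comp]
        congr 1
        refine MvPolynomial.ringHom_ext (fun c => ?_) (by simp [zv])
        simp [IsScalarTower.algebraMap_apply k (RF k l) (Polynomial (RF k l)),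
          IsScalarTower.algebraMap_apply k (MvPolynomial (Fin l) k) (RF k l)])

@[simp]
theorem shift_zv (v : Fin l → k) (i : Fin l) :
    shift v (zv i) = HahnSeries.C (zv i) + single (-1) (algebraMap k _ (v i)) := by
  simp [shift, zv, HahnSeries.C_apply]

@[simp]
theorem shift_algebraMap (v : Fin l → k) (c : k) :
    shift v (algebraMap k _ c) = HahnSeries.C (algebraMap k _ c) := by
  rw [IsScalarTower.algebraMap_apply k (MvPolynomial (Fin l) k) (RF k l)]
  simp [shift, IsScalarTower.algebraMap_apply k (RF k l) (Polynomial (RF k l)),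
    IsScalarTower.algebraMap_apply k (MvPolynomial (Fin l) k) (RF k l)]

theorem shift_zero : shift (0 : Fin l → k) = HahnSeries.C :=
  RF.ringHom_ext (by simp) (by simp)

theorem shift_embMap {m : ℕ} {f : Fin m → Fin l} (hf : Function.Injective f) (v : Fin l → k)
    (α : RF k m) : shift v (embMap f hf α) = laurentMap (embMap f hf) (shift (v ∘ f) α) :=
  RingHom.congr_fun (f := (shift v).comp (embMap f hf))
    (g := (laurentMap (embMap f hf)).comp (shift (v ∘ f)))
    (RF.ringHom_ext (by simp) (by simp)) α

theorem lcoeff_eq_coeff_shift {S : RF k l →+* RatFunc (RF k l)} {J : Set (Fin l)}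
    (hS : ∀ i, S (zv i) =
      if i ∈ J then RatFunc.C (zv (k := k) i) + RatFunc.X⁻¹ else RatFunc.C (zv (k := k) i))
    (hSc : ∀ c : k, S (algebraMap k _ c) = RatFunc.C (algebraMap k _ c)) (α : RF k l) (n : ℤ) :
    lcoeff n (S α) = (shift (J.indicator 1) α).coeff n :=
  congrArg (HahnSeries.coeff · n) <|
    RingHom.congr_fun (f := (ratFuncToLaurent _).comp S)
      (RF.ringHom_ext (fun i => by by_cases hi : i ∈ J <;> simp [hS, hi, -map_inv₀])
        (by simp [hSc])) α

end Shift

end LaurentExpansions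

section PolynomialApproximation

variable {L F : Type*} [Field L] [Field F] (s : L →+* F) (u : F) (w : AddValuation L (WithTop ℤ))
  (V : Set (AddValuation F (WithTop ℤ)))

/-- `f` is approximated to any order, with respect to all the valuations in `V`, by polynomials in
`u` whose coefficients come from `L` along `s` and have `w`-valuations bounded below uniformly in
the order of the approximation. -/
def IsApproximable (f : F) : Prop :=
  ∃ M : ℕ, ∀ N : ℕ, ∃ P : Polynomial L, (∀ j, ((-M : ℤ) : WithTop ℤ) ≤ w (P.coeff j)) ∧
    ∀ v ∈ V, ((N : ℤ) : WithTop ℤ) ≤ v (f - P.eval₂ s u)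

variable {s u w V}

theorem exists_neg_natCast_le (x : WithTop ℤ) : ∃ M : ℕ, ((-M : ℤ) : WithTop ℤ) ≤ x := by
  induction x with
  | top => exact ⟨0, le_top⟩
  | coe n => exact ⟨n.natAbs, WithTop.coe_le_coe.2 (by omega)⟩

theorem isApproximable_apply (c : L) : IsApproximable s u w V (s c) := by
  obtain ⟨M, hM⟩ := exists_neg_natCast_le (w c)
  refine ⟨M, fun _ => ⟨Polynomial.C c, fun j => ?_, fun v _ => by simp⟩⟩
  rw [Polynomial.coeff_C]
  split_ifs
  · exact hM
  · simp

theorem isApproximable_generator : IsApproximable s u w V u := by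
  refine ⟨0, fun _ => ⟨Polynomial.X, fun j => ?_, fun v _ => by simp⟩⟩
  rw [Polynomial.coeff_X]
  split_ifs <;> simp

theorem IsApproximable.add {f g : F} (hf : IsApproximable s u w V f)
    (hg : IsApproximable s u w V g) : IsApproximable s u w V (f + g) := by
  obtain ⟨M, hf⟩ := hf
  obtain ⟨M', hg⟩ := hg
  refine ⟨M + M', fun N => ?_⟩
  obtain ⟨P, hPM, hP⟩ := hf N
  obtain ⟨Q, hQM, hQ⟩ := hg N
  refine ⟨P + Q, fun j => ?_, fun v hv => ?_⟩
  · rw [Polynomial.coeff_add]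
    exact w.map_le_add (le_trans (by norm_cast; omega) (hPM j))
      (le_trans (by norm_cast; omega) (hQM j))
  · rw [Polynomial.eval₂_add, add_sub_add_comm]
    exact v.map_le_add (hP v hv) (hQ v hv)

section Contracting

variable (hs : ∀ v ∈ V, ∀ c, min 0 (w c) ≤ v (s c)) (hu : ∀ v ∈ V, 1 ≤ v u)
include hs hu

theorem add_natCast_le_valuation_mul_pow {v : AddValuation F (WithTop ℤ)} (hv : v ∈ V) {M : ℕ}
    {c : L} (hc : ((-M : ℤ) : WithTop ℤ) ≤ w c) (j : ℕ) :
    ((-M + j : ℤ) : WithTop ℤ) ≤ v (s c * u ^ j) := by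
  rw [v.map_mul, v.map_pow, WithTop.coe_add]
  refine add_le_add ((le_min ?_ hc).trans (hs v hv c)) ?_
  · norm_cast; omega
  · simpa using nsmul_le_nsmul_right (hu v hv) j

theorem neg_natCast_le_valuation_eval₂ {v : AddValuation F (WithTop ℤ)} (hv : v ∈ V) {M : ℕ}
    {P : Polynomial L} (hP : ∀ j, ((-M : ℤ) : WithTop ℤ) ≤ w (P.coeff j)) :
    ((-M : ℤ) : WithTop ℤ) ≤ v (P.eval₂ s u) := by
  rw [Polynomial.eval₂_eq_sum]
  exact v.map_le_sum fun j _ => le_trans (by norm_cast; omega)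
    (add_natCast_le_valuation_mul_pow hs hu hv (hP j) j)

theorem IsApproximable.exists_neg_natCast_le_valuation {f : F} (hf : IsApproximable s u w V f) :
    ∃ M : ℕ, ∀ v ∈ V, ((-M : ℤ) : WithTop ℤ) ≤ v f := by
  obtain ⟨M, hf⟩ := hf
  obtain ⟨P, hPM, hP⟩ := hf 0
  refine ⟨M, fun v hv => ?_⟩
  rw [← sub_add_cancel f (P.eval₂ s u)]
  exact v.map_le_add (le_trans (by norm_cast; omega) (hP v hv))
    (neg_natCast_le_valuation_eval₂ hs hu hv hPM)

theorem IsApproximable.mul {f g : F} (hf : IsApproximable s u w V f)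
    (hg : IsApproximable s u w V g) : IsApproximable s u w V (f * g) := by
  obtain ⟨B, hB⟩ := hg.exists_neg_natCast_le_valuation hs hu
  obtain ⟨M, hf⟩ := hf
  obtain ⟨M', hg⟩ := hg
  refine ⟨M + M', fun N => ?_⟩
  obtain ⟨P, hPM, hP⟩ := hf (N + B)
  obtain ⟨Q, hQM, hQ⟩ := hg (N + M)
  refine ⟨P * Q, fun j => ?_, fun v hv => ?_⟩
  · rw [Polynomial.coeff_mul]
    refine w.map_le_sum fun p _ => ?_
    rw [w.map_mul]
    exact le_trans (by norm_cast; omega) (add_le_add (hPM p.1) (hQM p.2))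
  · have hsplit : f * g - (P * Q).eval₂ s u =
        (f - P.eval₂ s u) * g + P.eval₂ s u * (g - Q.eval₂ s u) := by
      rw [Polynomial.eval₂_mul]; ring
    rw [hsplit]
    refine v.map_le_add ?_ ?_ <;> rw [v.map_mul]
    · exact le_trans (by norm_cast; omega) (add_le_add (hP v hv) (hB v hv))
    · exact le_trans (by norm_cast; omega)
        (add_le_add (neg_natCast_le_valuation_eval₂ hs hu hv hPM) (hQ v hv))

theorem isApproximable_inv_one_sub {q : L} (hq : 0 ≤ w q) :
    IsApproximable s u w V (1 - s q * u)⁻¹ := by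
  refine ⟨0, fun N => ⟨∑ j ∈ Finset.range N, Polynomial.monomial j (q ^ j), fun j => ?_,
    fun v hv => ?_⟩⟩
  · rw [Polynomial.finsetSum_coeff]
    refine w.map_le_sum fun i _ => ?_
    rw [Polynomial.coeff_monomial]
    split_ifs
    · simpa using nsmul_nonneg hq i
    · simp
  · have hqu : 1 ≤ v (s q * u) := by
      simpa using add_natCast_le_valuation_mul_pow hs hu hv (M := 0) (by simpa using hq) 1
    have hv1 : v (1 - s q * u) = 0 := by
      rw [v.map_sub_eq_of_lt_left (by rw [v.map_one]; exact lt_of_lt_of_le zero_lt_one hqu),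
        v.map_one]
    have hne : 1 - s q * u ≠ 0 := fun h => by simp [h] at hv1
    have hgeom : (1 - s q * u)⁻¹ -
        Polynomial.eval₂ s u (∑ j ∈ Finset.range N, Polynomial.monomial j (q ^ j)) =
          (s q * u) ^ N * (1 - s q * u)⁻¹ := by
      have hsum := geom_sum_mul_neg (s q * u) N
      simp only [Polynomial.eval₂_finsetSum, Polynomial.eval₂_monomial, map_pow, ← mul_pow]
      field_simp
      linear_combination -hsum
    rw [hgeom, v.map_mul, v.map_inv, v.map_pow, hv1]
    simpa using nsmul_le_nsmul_right hqu N

theorem isApproximable_inv_inv_sub (hu0 : u ≠ 0) {q : L} (hq : 0 ≤ w q) :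
    IsApproximable s u w V (u⁻¹ - s q)⁻¹ := by
  have hfactor : (u⁻¹ - s q)⁻¹ = u * (1 - s q * u)⁻¹ := by
    rw [← inv_inv u, ← mul_inv, inv_inv, mul_sub, mul_one]
    congr 1
    field_simp
  exact hfactor ▸ isApproximable_generator.mul hs hu (isApproximable_inv_one_sub hs hu hq)

variable (s u w V) in
/-- The subring of the elements satisfying `IsApproximable`. -/
def approximableSubring : Subring F where
  carrier := {f | IsApproximable s u w V f}
  mul_mem' := IsApproximable.mul hs hu
  one_mem' := map_one s ▸ isApproximable_apply 1
  add_mem' := IsApproximable.add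
  zero_mem' := map_zero s ▸ isApproximable_apply 0
  neg_mem' {f} hf := by
    simpa using (isApproximable_apply (s := s) (-1)).mul hs hu hf

end Contracting

end PolynomialApproximation

/-- The ring of fractions `W⁻¹A` inside the field `F`, for a submonoid `W` of a subring `A`. -/
def fractionSubring {F : Type*} [Field F] (A : Subring F) (W : Submonoid F)
    (hWA : W ≤ A.toSubmonoid) : Subring F where
  carrier := {f | ∃ d ∈ W, d * f ∈ A}
  mul_mem' := by
    rintro f g ⟨d, hd, hf⟩ ⟨e, he, hg⟩
    exact ⟨d * e, W.mul_mem hd he, by simpa only [mul_mul_mul_comm] using A.mul_mem hf hg⟩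
  one_mem' := ⟨1, W.one_mem, by simp⟩
  add_mem' := by
    rintro f g ⟨d, hd, hf⟩ ⟨e, he, hg⟩
    refine ⟨d * e, W.mul_mem hd he, ?_⟩
    have hsplit : d * e * (f + g) = e * (d * f) + d * (e * g) := by ring
    exact hsplit ▸ A.add_mem (A.mul_mem (hWA he) hf) (A.mul_mem (hWA hd) hg)
  zero_mem' := ⟨1, W.one_mem, by simp⟩
  neg_mem' := by
    rintro f ⟨d, hd, hf⟩
    exact ⟨d, hd, by simpa only [mul_neg] using A.neg_mem hf⟩

theorem le_fractionSubring {F : Type*} [Field F] {A : Subring F} {W : Submonoid F}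
    (hWA : W ≤ A.toSubmonoid) : A ≤ fractionSubring A W hWA :=
  fun f hf => ⟨1, W.one_mem, by simpa using hf⟩

section Peeling

open HahnSeries

variable {k : Type} [Field k] {l : ℕ}

/-- The order of vanishing at `z₁ = ∞`. -/
def ordInfty (k : Type) [Field k] (l : ℕ) : AddValuation (RF k (l + 1)) (WithTop ℤ) :=
  (addVal ℤ (RF k l)).comap (expandAtInfty k l)

/-- The order of vanishing at `t = ∞` after the substitution `zᵢ ↦ zᵢ + vᵢ t`. -/
def ordShift (v : Fin l → k) : AddValuation (RF k l) (WithTop ℤ) :=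
  (addVal ℤ (RF k l)).comap (shift v)

theorem ordInfty_apply (α : RF k (l + 1)) :
    ordInfty k l α = (expandAtInfty k l α).orderTop := rfl

theorem ordShift_apply (v : Fin l → k) (α : RF k l) : ordShift v α = (shift v α).orderTop := rfl

theorem ordShift_embMap {m : ℕ} {f : Fin m → Fin l} (hf : Function.Injective f) (v : Fin l → k)
    (α : RF k m) : ordShift v (embMap f hf α) = ordShift (v ∘ f) α := by
  rw [ordShift_apply, shift_embMap, orderTop_laurentMap (RingHom.injective _), ordShift_apply]

theorem ordInfty_embMap_succ_nonneg (α : RF k l) :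
    0 ≤ ordInfty k l (embMap Fin.succ (Fin.succ_injective l) α) := by
  rw [ordInfty_apply, expandAtInfty_embMap_succ]
  exact orderTop_single_le

theorem ordInfty_inv_zv_zero : ordInfty k l (zv 0)⁻¹ = 1 := by
  rw [AddValuation.map_inv, ordInfty_apply, expandAtInfty_zv_zero, orderTop_single one_ne_zero]
  rfl

theorem ordShift_inv_zv {v : Fin l → k} {i : Fin l} (hi : v i ≠ 0) :
    ordShift v (zv i)⁻¹ = 1 := by
  have htop : (single (-1) (algebraMap k (RF k l) (v i))).orderTop = ((-1 : ℤ) : WithTop ℤ) :=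
    orderTop_single (by simpa using hi)
  rw [AddValuation.map_inv, ordShift_apply, shift_zv, orderTop_add_eq_right, htop]
  · rfl
  · exact htop ▸ lt_of_lt_of_le (by decide) orderTop_single_le

theorem ordShift_zv_nonneg {v : Fin l → k} {i : Fin l} (hi : v i = 0) : 0 ≤ ordShift v (zv i) := by
  rw [ordShift_apply, shift_zv, hi, map_zero, single_eq_zero, add_zero]
  exact orderTop_single_le

theorem coeff_expandAtInfty_eval₂ (P : Polynomial (RF k l)) (j : ℕ) :
    (expandAtInfty k l (P.eval₂ (embMap Fin.succ (Fin.succ_injective l)) (zv 0)⁻¹)).coeff j =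
      P.coeff j := by
  induction P using Polynomial.induction_on' with
  | add p q hp hq => simp [Polynomial.eval₂_add, hp, hq]
  | monomial m a =>
    simp [Polynomial.eval₂_monomial, expandAtInfty_embMap_succ, Polynomial.coeff_monomial,
      inv_single, HahnSeries.C_apply, coeff_single, eq_comm]

variable {v : Fin (l + 1) → k}

theorem min_ordShift_le_embMap_succ :
    ∀ w ∈ ({ordInfty k l, ordShift v} : Set (AddValuation (RF k (l + 1)) (WithTop ℤ))),
      ∀ c, min 0 (ordShift (v ∘ Fin.succ) c) ≤ w (embMap Fin.succ (Fin.succ_injective l) c) := by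
  rintro _ (rfl | rfl) c
  · exact (min_le_left _ _).trans (ordInfty_embMap_succ_nonneg c)
  · exact (min_le_right _ _).trans (ordShift_embMap _ _ _).ge

theorem one_le_inv_zv_zero (hv : v 0 ≠ 0) :
    ∀ w ∈ ({ordInfty k l, ordShift v} : Set (AddValuation (RF k (l + 1)) (WithTop ℤ))),
      1 ≤ w (zv 0)⁻¹ := by
  rintro _ (rfl | rfl)
  · exact ordInfty_inv_zv_zero.ge
  · exact (ordShift_inv_zv hv).ge

variable (v) in
/-- The functions of `z₁,…,z_{l+1}` which are approximable by polynomials in `z₁⁻¹`, both at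
`z₁ = ∞` and along the shift by a vector `v` with `v₁ ≠ 0`. -/
def regularSubring (hv : v 0 ≠ 0) : Subring (RF k (l + 1)) :=
  approximableSubring (embMap Fin.succ (Fin.succ_injective l)) (zv 0)⁻¹ (ordShift (v ∘ Fin.succ))
    {ordInfty k l, ordShift v} min_ordShift_le_embMap_succ (one_le_inv_zv_zero hv)

theorem embMap_succ_mem_regularSubring (hv : v 0 ≠ 0) (c : RF k l) :
    embMap Fin.succ (Fin.succ_injective l) c ∈ regularSubring v hv :=
  isApproximable_apply c

theorem inv_zv_zero_mem_regularSubring (hv : v 0 ≠ 0) : (zv 0)⁻¹ ∈ regularSubring v hv :=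
  isApproximable_generator

theorem inv_zv_zero_sub_mem_regularSubring (hv : v 0 ≠ 0) {j : Fin l} (hj : v j.succ = 0) :
    (zv 0 - zv j.succ)⁻¹ ∈ regularSubring v hv := by
  have hmem : (((zv 0 : RF k (l + 1))⁻¹)⁻¹ - embMap Fin.succ (Fin.succ_injective l) (zv j))⁻¹ ∈
      regularSubring v hv :=
    isApproximable_inv_inv_sub min_ordShift_le_embMap_succ (one_le_inv_zv_zero hv)
      (inv_ne_zero (zv_ne_zero 0)) (ordShift_zv_nonneg hj)
  simpa using hmem

/-- The nonzero elements of `regularSubring v hv` which are functions of the variables `z_{f(i)}`,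
used as denominators. -/
def regularDenominators {m : ℕ} {f : Fin m → Fin (l + 1)} (hf : Function.Injective f)
    (hv : v 0 ≠ 0) : Submonoid (RF k (l + 1)) :=
  (regularSubring v hv).toSubmonoid ⊓ (embMap f hf).range.toSubmonoid ⊓
    nonZeroDivisors (RF k (l + 1))

theorem regularDenominators_le {m : ℕ} {f : Fin m → Fin (l + 1)} (hf : Function.Injective f)
    (hv : v 0 ≠ 0) : regularDenominators hf hv ≤ (regularSubring v hv).toSubmonoid :=
  inf_le_left.trans inf_le_left

section Denominators

variable {m : ℕ} {f : Fin (m + 1) → Fin (l + 1)} (hf : Function.Injective f) (hf0 : f 0 = 0)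
  (hv0 : v 0 ≠ 0)
include hf0

theorem inv_zv_zero_mem_regularDenominators : (zv 0)⁻¹ ∈ regularDenominators hf hv0 :=
  ⟨⟨inv_zv_zero_mem_regularSubring hv0, (zv 0)⁻¹, by rw [map_inv₀, embMap_zv, hf0]⟩,
    mem_nonZeroDivisors_of_ne_zero (inv_ne_zero (zv_ne_zero 0))⟩

theorem exists_mem_regularDenominators_mul_inv_sub_mem {i : Fin (m + 1)} {j : Fin l}
    (hij : f i = j.succ) :
    ∃ d ∈ regularDenominators hf hv0, d * (zv 0 - zv j.succ)⁻¹ ∈ regularSubring v hv0 := by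
  have hu := inv_zv_zero_mem_regularSubring hv0
  have hinv : (zv j.succ : RF k (l + 1))⁻¹ ∈ regularSubring v hv0 := by
    simpa using embMap_succ_mem_regularSubring hv0 (zv j)⁻¹
  have hne : (zv 0 - zv j.succ : RF k (l + 1)) ≠ 0 :=
    sub_ne_zero.2 (zv_injective.ne (Fin.succ_ne_zero j).symm)
  have hz0 : (zv 0 : RF k (l + 1)) ≠ 0 := zv_ne_zero 0
  have hzj : (zv j.succ : RF k (l + 1)) ≠ 0 := zv_ne_zero _
  have hsub : (zv j.succ : RF k (l + 1))⁻¹ - (zv 0)⁻¹ =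
      (zv 0 - zv j.succ) * (zv j.succ * zv 0)⁻¹ := by
    field_simp
  refine ⟨(zv j.succ)⁻¹ - (zv 0)⁻¹, ⟨⟨(regularSubring v hv0).sub_mem hinv hu, ?_⟩, ?_⟩, ?_⟩
  · exact ⟨(zv i)⁻¹ - (zv 0)⁻¹, by simp only [map_sub, map_inv₀, embMap_zv, hij, hf0]⟩
  · rw [hsub]
    exact mem_nonZeroDivisors_of_ne_zero (mul_ne_zero hne (inv_ne_zero (mul_ne_zero hzj hz0)))
  · rw [hsub, mul_right_comm, mul_inv_cancel₀ hne, one_mul, mul_inv]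
    exact mul_mem hinv hu

theorem Phi_subset_fractionSubring_regularSubring (hv : ∀ i ∉ Set.range f, v i = 0) :
    Phi k (l + 1) ⊆ fractionSubring _ _ (regularDenominators_le hf hv0) := by
  have hsucc (c : RF k l) : embMap Fin.succ (Fin.succ_injective l) c ∈
      fractionSubring _ _ (regularDenominators_le hf hv0) :=
    le_fractionSubring _ (embMap_succ_mem_regularSubring hv0 c)
  have hzv : ∀ i, zv i ∈ fractionSubring _ _ (regularDenominators_le hf hv0) := by
    refine Fin.cases ?_ fun i => by simpa using hsucc (zv i)
    refine ⟨(zv 0)⁻¹, inv_zv_zero_mem_regularDenominators hf hf0 hv0, ?_⟩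
    exact (inv_mul_cancel₀ (zv_ne_zero (k := k) (0 : Fin (l + 1)))) ▸ one_mem _
  refine Phi_subset_of_subring _ (fun c => by simpa using hsucc (algebraMap k _ c)) hzv
    fun i j hij => ?_
  obtain ⟨j, rfl⟩ := Fin.exists_succ_eq.2 (Fin.ne_zero_of_lt hij)
  cases i using Fin.cases with
  | succ i => exact embMap_inv_zv_sub_zv (k := k) Fin.succ _ i j ▸ hsucc _
  | zero =>
    by_cases hj : j.succ ∈ Set.range f
    · obtain ⟨i, hi⟩ := hj
      exact exists_mem_regularDenominators_mul_inv_sub_mem hf hf0 hv0 hi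
    · exact le_fractionSubring _ (inv_zv_zero_sub_mem_regularSubring hv0 (hv _ hj))

end Denominators

end Peeling

section CoefficientSubmodules

open HahnSeries

theorem coeff_mul_mem_mul {k A : Type*} [CommSemiring k] [CommRing A] [Algebra k A]
    {S T : Submodule k A} {x y : LaurentSeries A} (hx : ∀ n, x.coeff n ∈ S)
    (hy : ∀ n, y.coeff n ∈ T) (n : ℤ) : (x * y).coeff n ∈ S * T := by
  rw [HahnSeries.coeff_mul]
  exact Submodule.sum_mem _ fun p _ => Submodule.mul_mem_mul (hx p.1) (hy p.2)

variable {k : Type} [Field k] {l : ℕ}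

/- Modulo any power of `t⁻¹`, `β` can be replaced by a polynomial in `z₁⁻¹`. Its low coefficients
are those of the expansion of `β` at `z₁ = ∞`; the other terms contribute only to higher orders. -/
theorem coeff_shift_mem_of_regular {v : Fin (l + 1) → k} {hv : v 0 ≠ 0} {β : RF k (l + 1)}
    (hβ : β ∈ regularSubring v hv) {T : Submodule k (RF k (l + 1))}
    (hT : ∀ (j : ℕ) (n : ℤ), (shift v (embMap Fin.succ (Fin.succ_injective l)
      ((expandAtInfty k l β).coeff j) * (zv 0)⁻¹ ^ j)).coeff n ∈ T) (n : ℤ) :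
    (shift v β).coeff n ∈ T := by
  obtain ⟨M, hM⟩ := hβ
  obtain ⟨P, hPM, hP⟩ := hM (n.natAbs + M + 1)
  have hcoeff (j : ℕ) (hj : j < n.natAbs + M + 1) :
      P.coeff j = (expandAtInfty k l β).coeff j := by
    rw [← coeff_expandAtInfty_eval₂, eq_comm, ← sub_eq_zero, ← HahnSeries.coeff_sub, ← map_sub]
    refine coeff_eq_zero_of_lt_orderTop (lt_of_lt_of_le ?_ (hP (ordInfty k l) (by simp)))
    exact_mod_cast hj
  have hβP : (shift v β).coeff n =
      (shift v (P.eval₂ (embMap Fin.succ (Fin.succ_injective l)) (zv 0)⁻¹)).coeff n := by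
    rw [← sub_eq_zero, ← HahnSeries.coeff_sub, ← map_sub]
    refine coeff_eq_zero_of_lt_orderTop (lt_of_lt_of_le ?_ (hP (ordShift v) (by simp)))
    exact WithTop.coe_lt_coe.2 (by omega)
  rw [hβP, Polynomial.eval₂_eq_sum, Polynomial.sum, map_sum, HahnSeries.coeff_sum]
  refine Submodule.sum_mem _ fun j _ => ?_
  by_cases hj : j < n.natAbs + M + 1
  · exact hcoeff j hj ▸ hT j n
  · have hle := add_natCast_le_valuation_mul_pow min_ordShift_le_embMap_succ
      (one_le_inv_zv_zero hv) (v := ordShift v) (by simp) (hPM j) j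
    rw [coeff_eq_zero_of_lt_orderTop (lt_of_lt_of_le (WithTop.coe_lt_coe.2 (by omega)) hle)]
    exact T.zero_mem

theorem expandAtInfty_embMap {m : ℕ} {f : Fin m → Fin l} (hf : Function.Injective f)
    {f' : Fin (m + 1) → Fin (l + 1)} (hf' : Function.Injective f') (h0 : f' 0 = 0)
    (hsucc : ∀ i, f' i.succ = (f i).succ) (d : RF k (m + 1)) :
    expandAtInfty k l (embMap f' hf' d) = laurentMap (embMap f hf) (expandAtInfty k m d) :=
  RingHom.congr_fun (f := (expandAtInfty k l).comp (embMap f' hf'))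
    (g := (laurentMap (embMap f hf)).comp (expandAtInfty k m))
    (RF.ringHom_ext (Fin.cases (by simp [h0]) (by simp [hsucc])) (by simp)) d

section ExternalProduct

variable {m r : ℕ} {f : Fin m ↪ Fin l} {g : Fin r ↪ Fin l} {T : Submodule k (RF k r)}

theorem coeff_mul_mem_externalProduct_top {x y : LaurentSeries (RF k l)}
    (hx : ∀ n, x.coeff n ∈ (⊤ : Submodule k (RF k m)).map (embAlgHom f).toLinearMap)
    (hy : ∀ n, y.coeff n ∈ externalProduct f g ⊤ T) (n : ℤ) :
    (x * y).coeff n ∈ externalProduct f g ⊤ T := by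
  have hmem := coeff_mul_mem_mul hx hy n
  rw [externalProduct, ← mul_assoc, ← Submodule.map_mul] at hmem
  exact mul_le_mul_left (Submodule.map_mono le_top) _ hmem

theorem coeff_shift_embMap_mem_map_top (v : Fin l → k) (d : RF k m) (n : ℤ) :
    (shift v (embMap f f.injective d)).coeff n ∈
      (⊤ : Submodule k (RF k m)).map (embAlgHom f).toLinearMap := by
  rw [shift_embMap, coeff_laurentMap]
  exact Submodule.mem_map_of_mem Submodule.mem_top

variable {f' : Fin (m + 1) ↪ Fin (l + 1)} (h0 : f' 0 = 0) (hsucc : ∀ i, f' i.succ = (f i).succ)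
include h0 hsucc

theorem coeff_shift_coeff_expandAtInfty_mul_mem {v : Fin l → k} {α : RF k (l + 1)}
    (hα : ∀ j n, (shift v ((expandAtInfty k l α).coeff j)).coeff n ∈ externalProduct f g ⊤ T)
    (d : RF k (m + 1)) (j n : ℤ) :
    (shift v ((expandAtInfty k l (embMap f' f'.injective d * α)).coeff j)).coeff n ∈
      externalProduct f g ⊤ T := by
  rw [map_mul, expandAtInfty_embMap f.injective f'.injective h0 hsucc, HahnSeries.coeff_mul,
    map_sum, HahnSeries.coeff_sum]
  refine Submodule.sum_mem _ fun p _ => ?_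
  rw [map_mul, coeff_laurentMap]
  exact coeff_mul_mem_externalProduct_top (coeff_shift_embMap_mem_map_top v _) (hα p.2) n

theorem coeff_shift_mem_externalProduct_of_regular {v : Fin (l + 1) → k} {hv0 : v 0 ≠ 0}
    {β : RF k (l + 1)} (hβ : β ∈ regularSubring v hv0)
    (hβT : ∀ j n, (shift (v ∘ Fin.succ) ((expandAtInfty k l β).coeff j)).coeff n ∈
      externalProduct f g ⊤ T) (n : ℤ) :
    (shift v β).coeff n ∈ externalProduct f' (g.trans (Fin.succEmb l)) ⊤ T := by
  have hle : externalProduct (f.trans (Fin.succEmb l)) (g.trans (Fin.succEmb l)) ⊤ T ≤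
      externalProduct f' (g.trans (Fin.succEmb l)) ⊤ T := by
    have hf' : f.trans (Fin.succEmb l) = (Fin.succEmb m).trans f' :=
      DFunLike.ext _ _ fun i => (hsucc i).symm
    rw [externalProduct, externalProduct, hf', ← map_embAlgHom]
    exact mul_le_mul_left (Submodule.map_mono le_top) _
  refine coeff_shift_mem_of_regular hβ (fun j => ?_) n
  have hpow : ((zv 0)⁻¹ ^ j : RF k (l + 1)) = embMap f' f'.injective ((zv 0)⁻¹ ^ j) := by
    rw [map_pow, map_inv₀, embMap_zv, h0]
  rw [hpow, map_mul, mul_comm]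
  refine coeff_mul_mem_externalProduct_top (coeff_shift_embMap_mem_map_top v _)
    (fun n => hle ?_)
  rw [shift_embMap, coeff_laurentMap, ← map_externalProduct]
  exact Submodule.mem_map_of_mem (hβT j n)

theorem coeff_shift_mem_externalProduct_of_mem_Phi {v : Fin (l + 1) → k} (hv0 : v 0 ≠ 0)
    (hv : ∀ i ∉ Set.range f', v i = 0) {α : RF k (l + 1)} (hα : α ∈ Phi k (l + 1))
    (hαT : ∀ j n, (shift (v ∘ Fin.succ) ((expandAtInfty k l α).coeff j)).coeff n ∈
      externalProduct f g ⊤ T) (n : ℤ) :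
    (shift v α).coeff n ∈ externalProduct f' (g.trans (Fin.succEmb l)) ⊤ T := by
  obtain ⟨_, ⟨⟨-, d, rfl⟩, hd⟩, hdα⟩ :=
    Phi_subset_fractionSubring_regularSubring f'.injective h0 hv0 hv hα
  have hcancel : shift v α = shift v (embMap f' f'.injective d⁻¹) *
      shift v (embMap f' f'.injective d * α) := by
    rw [← map_mul, map_inv₀, inv_mul_cancel_left₀ (nonZeroDivisors.ne_zero hd)]
  rw [hcancel]
  exact coeff_mul_mem_externalProduct_top (coeff_shift_embMap_mem_map_top v _)
    (coeff_shift_mem_externalProduct_of_regular h0 hsucc hdα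
      (coeff_shift_coeff_expandAtInfty_mul_mem h0 hsucc hαT d)) n

end ExternalProduct

theorem coeff_shift_mem_externalProduct_castLE {G : Type*}
    {Ω : ∀ l : ℕ, (Fin l → G) → Submodule k (RF k l)} (hΩPhi : ∀ l a, ∀ α ∈ Ω l a, α ∈ Phi k l)
    (hΩ : ∀ l a, ∀ α ∈ Ω (l + 1) a, ∀ n, (expandAtInfty k l α).coeff n ∈ Ω l (a ∘ Fin.succ))
    {r : ℕ} (m : ℕ) {v : Fin (r + m) → k}
    (hv0 : ∀ i, v (Fin.castLEEmb (Nat.le_add_left m r) i) ≠ 0)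
    (hv : ∀ j, v (Fin.addNatEmb m j) = 0) (a : Fin (r + m) → G) {α : RF k (r + m)}
    (hα : α ∈ Ω (r + m) a) (n : ℤ) :
    (shift v α).coeff n ∈ externalProduct (Fin.castLEEmb (Nat.le_add_left m r))
      (Fin.addNatEmb m) ⊤ (Ω r (a ∘ Fin.addNatEmb m)) := by
  induction m generalizing n with
  | zero =>
    have hv : v = 0 := funext hv
    have hg : embAlgHom (k := k) (Fin.addNatEmb (n := r) 0) = AlgHom.id k _ :=
      AlgHom.ext fun x => RingHom.congr_fun embMap_id x
    have hone : (1 : RF k r) ∈ (⊤ : Submodule k (RF k 0)).map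
        (embAlgHom (Fin.castLEEmb (Nat.le_add_left 0 r))).toLinearMap :=
      ⟨1, trivial, map_one (embAlgHom _)⟩
    rw [hv, shift_zero, HahnSeries.C_apply, coeff_single]
    split_ifs
    · rw [← one_mul α]
      exact Submodule.mul_mem_mul hone ⟨α, hα, DFunLike.congr_fun hg α⟩
    · exact Submodule.zero_mem _
  | succ m ih =>
    refine coeff_shift_mem_externalProduct_of_mem_Phi
      (f := Fin.castLEEmb (Nat.le_add_left m r)) (g := Fin.addNatEmb m)
      (f' := Fin.castLEEmb (Nat.le_add_left (m + 1) r)) rfl (fun _ => rfl) (hv0 0)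
      (fun i hi => ?_) (hΩPhi _ _ _ hα)
      (fun j n => ih (fun i => hv0 i.succ) hv _ (hΩ _ _ _ hα j) n) n
    have him : m + 1 ≤ i := not_lt.1 fun him => hi ⟨⟨i, him⟩, rfl⟩
    have hir : (i : ℕ) - (m + 1) < r := by omega
    exact (congrArg v (Fin.ext (Nat.sub_add_cancel him).symm)).trans (hv ⟨_, hir⟩)

end CoefficientSubmodules

section Transport

variable {k : Type} [Field k] {G : Type*} {Ω : ∀ l : ℕ, (Fin l → G) → Submodule k (RF k l)}

theorem exists_equiv_castLEEmb_addNatEmb {m r l : ℕ} {x : Fin m ↪ Fin l} {y : Fin r ↪ Fin l}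
    (hxy : IsCompl (Set.range x) (Set.range y)) :
    ∃ e : Fin (r + m) ≃ Fin l,
      (Fin.castLEEmb (Nat.le_add_left m r)).trans e.toEmbedding = x ∧
        (Fin.addNatEmb m).trans e.toEmbedding = y := by
  have hinj : Function.Injective (Sum.elim x y) := x.injective.sumElim y.injective
    fun i j hij => Set.disjoint_left.1 hxy.disjoint ⟨i, rfl⟩ ⟨j, hij.symm⟩
  have hsurj : Function.Surjective (Sum.elim x y) :=
    Set.range_eq_univ.1 (Set.Sum.elim_range x y ▸ hxy.sup_eq_top)
  let s : Fin m ⊕ Fin r ≃ Fin (r + m) := finSumFinEquiv.trans (finCongr (Nat.add_comm m r))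
  have hinl (i : Fin m) : s (Sum.inl i) = Fin.castLEEmb (Nat.le_add_left m r) i := rfl
  have hinr (j : Fin r) : s (Sum.inr j) = Fin.addNatEmb m j := Fin.ext (Nat.add_comm m j)
  refine ⟨s.symm.trans (.ofBijective _ ⟨hinj, hsurj⟩), ?_, ?_⟩ <;> ext i
  · simp [← hinl, Equiv.ofBijective]
  · simp [← hinr, Equiv.ofBijective]

theorem coeff_shift_mem_externalProduct_top (hΩPhi : ∀ l a, ∀ α ∈ Ω l a, α ∈ Phi k l)
    (hΩperm : ∀ (l : ℕ) (a : Fin l → G) (σ : Equiv.Perm (Fin l)) (α : RF k l),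
      permHom σ α ∈ Ω l a ↔ α ∈ Ω l (a ∘ σ))
    (hΩ : ∀ l a, ∀ α ∈ Ω (l + 1) a, ∀ n, (expandAtInfty k l α).coeff n ∈ Ω l (a ∘ Fin.succ))
    {m r l : ℕ} {x : Fin m ↪ Fin l} {y : Fin r ↪ Fin l}
    (hxy : IsCompl (Set.range x) (Set.range y)) {v : Fin l → k} (hvx : ∀ i, v (x i) ≠ 0)
    (hvy : ∀ j, v (y j) = 0) {a : Fin l → G} {α : RF k l} (hα : α ∈ Ω l a) (n : ℤ) :
    (shift v α).coeff n ∈ externalProduct x y ⊤ (Ω r (a ∘ y)) := by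
  obtain ⟨e, rfl, rfl⟩ := exists_equiv_castLEEmb_addNatEmb hxy
  obtain rfl : r + m = l := by simpa using Fintype.card_congr e
  have hcomp : permHom e (permHom e.symm α) = α := by
    have he : (e ∘ e.symm : Fin (r + m) → Fin (r + m)) = id := e.self_comp_symm
    simp only [permHom, ← RingHom.comp_apply, embMap_comp, he, embMap_id, RingHom.id_apply]
  have hperm : permHom e.symm α ∈ Ω (r + m) (a ∘ e) := by
    rwa [hΩperm, Function.comp_assoc, e.self_comp_symm]
  rw [← hcomp, permHom, shift_embMap, coeff_laurentMap,
    ← map_externalProduct _ _ e.toEmbedding]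
  exact Submodule.mem_map_of_mem
    (coeff_shift_mem_externalProduct_castLE hΩPhi hΩ m hvx hvy (a ∘ e) hperm n)

end Transport

section Taylor

/-- The subring of constants of a derivation. -/
def constantSubring {R A : Type*} [CommRing R] [CommRing A] [Algebra R A]
    (d : Derivation R A A) : Subring A where
  carrier := {x | d x = 0}
  zero_mem' := map_zero d
  one_mem' := d.map_one_eq_zero
  add_mem' {x y} (hx : d x = 0) (hy : d y = 0) := by simp [hx, hy]
  mul_mem' {x y} (hx : d x = 0) (hy : d y = 0) := by simp [hx, hy]
  neg_mem' {x} (hx : d x = 0) := by simp [hx]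

variable {R A B : Type*} [CommRing R] [CommRing A] [Algebra R A] [CommRing B]
  (δ : Derivation R A A) (φ ψ : A →+* B) (t : B)

/-- The polynomials `Q = ∑ⱼ (δʲα / j!) Tʲ` for which Taylor's formula `ψ α = ∑ⱼ φ (δʲα / j!) tʲ`
holds. Their shape is expressed without dividing by `j!` as `∂Q/∂T = δQ`. -/
def taylorSubring : Subring (Polynomial A) :=
  letI : Differential A := ⟨δ.restrictScalars ℤ⟩
  constantSubring (Differential.implicitDeriv (-1 : Polynomial A)) ⊓
    RingHom.eqLocus (ψ.comp Polynomial.constantCoeff) (Polynomial.eval₂RingHom φ t)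

variable {δ φ ψ t}

theorem mem_taylorSubring {Q : Polynomial A} :
    Q ∈ taylorSubring δ φ ψ t ↔
      (∀ j : ℕ, Q.coeff (j + 1) * (j + 1) = δ (Q.coeff j)) ∧ ψ (Q.coeff 0) = Q.eval₂ φ t := by
  refine and_congr ?_ Iff.rfl
  let : Differential A := ⟨δ.restrictScalars ℤ⟩
  change Differential.implicitDeriv (-1) Q = 0 ↔ _
  rw [Polynomial.ext_iff]
  refine forall_congr' fun j => ?_
  have hderiv (a : A) : Differential.deriv a = δ a := rfl
  rw [eq_comm (b := δ _), ← sub_eq_zero (a := δ _)]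
  simp [Differential.implicitDeriv, Polynomial.coeff_derivative, sub_eq_add_neg, hderiv]

theorem C_mem_taylorSubring {a : A} (hδ : δ a = 0) (ha : ψ a = φ a) :
    Polynomial.C a ∈ taylorSubring δ φ ψ t := by
  refine mem_taylorSubring.2 ⟨fun j => ?_, by simpa⟩
  cases j <;> simp [Polynomial.coeff_C_succ, hδ]

theorem C_add_X_mem_taylorSubring {a : A} (hδ : δ a = 1) (ha : ψ a = φ a + t) :
    Polynomial.C a + Polynomial.X ∈ taylorSubring δ φ ψ t := by
  refine mem_taylorSubring.2 ⟨fun j => ?_, by simpa⟩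
  rcases j with _ | _ | j <;> simp [Polynomial.coeff_C, Polynomial.coeff_X, hδ]

end Taylor

section Translation

open HahnSeries

variable {k : Type} [Field k] {l : ℕ} {δ : Derivation k (RF k l) (RF k l)} {v : Fin l → k}

theorem Phi_subset_map_constantCoeff_taylorSubring (hδ : ∀ i, δ (zv i) = 1) :
    Phi k l ⊆ (taylorSubring δ (shift v) (shift (v + 1)) (single (-1) 1)).map
      Polynomial.constantCoeff := by
  have hshift (i : Fin l) : shift (v + 1) (zv i) = shift v (zv i) + single (-1) 1 := by
    simp [← add_assoc]
  refine Phi_subset_of_subring _ (fun c => ⟨Polynomial.C (algebraMap k _ c), ?_, by simp⟩)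
    (fun i => ⟨Polynomial.C (zv i) + Polynomial.X, ?_, by simp⟩)
    (fun i j _ => ⟨Polynomial.C (zv i - zv j)⁻¹, ?_, by simp⟩)
  · exact C_mem_taylorSubring (δ.map_algebraMap c) (by simp)
  · exact C_add_X_mem_taylorSubring (hδ i) (hshift i)
  · refine C_mem_taylorSubring (by simp [Derivation.leibniz_inv, hδ]) ?_
    simp only [map_inv₀, map_sub, hshift, add_sub_add_right_eq_sub]

theorem coeff_shift_add_one_mem [CharZero k] (hδ : ∀ i, δ (zv i) = 1) {S T : Submodule k (RF k l)}
    (hSPhi : ∀ α ∈ S, α ∈ Phi k l) (hSδ : ∀ α ∈ S, δ α ∈ S)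
    (hST : ∀ α ∈ S, ∀ n, (shift v α).coeff n ∈ T) {α : RF k l} (hα : α ∈ S) (n : ℤ) :
    (shift (v + 1) α).coeff n ∈ T := by
  obtain ⟨Q, hQ, rfl⟩ := Phi_subset_map_constantCoeff_taylorSubring (v := v) hδ (hSPhi α hα)
  obtain ⟨hQδ, hQshift⟩ := mem_taylorSubring.1 hQ
  have hQS (j : ℕ) : Q.coeff j ∈ S := by
    induction j with
    | zero => exact hα
    | succ j ih =>
      have hj : (j + 1 : k) ≠ 0 := j.cast_add_one_ne_zero
      rw [← S.smul_mem_iff hj, Algebra.smul_def, mul_comm]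
      simpa [hQδ j] using hSδ _ ih
  rw [Polynomial.constantCoeff_apply, hQshift, Polynomial.eval₂_eq_sum, Polynomial.sum,
    HahnSeries.coeff_sum]
  refine T.sum_mem fun j _ => ?_
  rw [single_pow, one_pow, coeff_mul_single]
  simpa using hST _ (hQS j) _

end Translation

section LinearDisjointness

open TensorProduct
open Algebra.TensorProduct (productMap)

section Localization

variable {k A B K L E : Type*} [CommRing k] [CommRing A] [CommRing B] [CommRing K] [CommRing L]
  [CommRing E] [Algebra k A] [Algebra k B] [Algebra k K] [Algebra k L] [Algebra k E]
  [Algebra A K] [IsScalarTower k A K] [Algebra B L] [IsScalarTower k B L]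
  (M : Submonoid A) (N : Submonoid B) [IsLocalization M K] [IsLocalization N L]

theorem exists_tmul_mul_eq_map (w : K ⊗[k] L) :
    ∃ a ∈ M, ∃ b ∈ N, ∃ t : A ⊗[k] B,
      algebraMap A K a ⊗ₜ algebraMap B L b * w = Algebra.TensorProduct.map
        (IsScalarTower.toAlgHom k A K) (IsScalarTower.toAlgHom k B L) t := by
  induction w with
  | zero => exact ⟨1, M.one_mem, 1, N.one_mem, 0, by simp⟩
  | tmul p q =>
    obtain ⟨⟨x, a⟩, hx⟩ := IsLocalization.surj M p
    obtain ⟨⟨y, b⟩, hy⟩ := IsLocalization.surj N q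
    exact ⟨a, a.2, b, b.2, x ⊗ₜ y, by simp [← hx, ← hy, mul_comm]⟩
  | add w₁ w₂ h₁ h₂ =>
    obtain ⟨a₁, ha₁, b₁, hb₁, t₁, ht₁⟩ := h₁
    obtain ⟨a₂, ha₂, b₂, hb₂, t₂, ht₂⟩ := h₂
    refine ⟨a₁ * a₂, M.mul_mem ha₁ ha₂, b₁ * b₂, N.mul_mem hb₁ hb₂,
      a₂ ⊗ₜ b₂ * t₁ + a₁ ⊗ₜ b₁ * t₂, ?_⟩
    simp only [map_add, map_mul, Algebra.TensorProduct.map_tmul, IsScalarTower.toAlgHom_apply,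
      ← ht₁, ← ht₂, ← Algebra.TensorProduct.tmul_mul_tmul]
    ring

include M N in
theorem productMap_injective_of_isLocalization {f : K →ₐ[k] E} {g : L →ₐ[k] E}
    (h : Function.Injective (productMap (f.comp (IsScalarTower.toAlgHom k A K))
      (g.comp (IsScalarTower.toAlgHom k B L)))) :
    Function.Injective (productMap f g) := by
  refine (injective_iff_map_eq_zero _).2 fun w hw => ?_
  obtain ⟨a, ha, b, hb, t, ht⟩ := exists_tmul_mul_eq_map M N w
  have ht0 : t = 0 := h <| by
    have hcomp : productMap (f.comp (IsScalarTower.toAlgHom k A K))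
        (g.comp (IsScalarTower.toAlgHom k B L)) = (productMap f g).comp (Algebra.TensorProduct.map
          (IsScalarTower.toAlgHom k A K) (IsScalarTower.toAlgHom k B L)) := by
      ext <;> simp
    rw [hcomp, AlgHom.comp_apply, ← ht, map_mul, hw, mul_zero, map_zero]
  have hunit : IsUnit (algebraMap A K a ⊗ₜ[k] algebraMap B L b) := by
    simpa using ((IsLocalization.map_units K ⟨a, ha⟩).map
      (Algebra.TensorProduct.includeLeft (R := k) (S := k) (B := L))).mul
        ((IsLocalization.map_units L ⟨b, hb⟩).map
          (Algebra.TensorProduct.includeRight (R := k) (A := K)))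
  rwa [ht0, map_zero, hunit.mul_right_eq_zero] at ht

end Localization

theorem productMap_rename_injective {k σ τ υ : Type*} [CommRing k] {f : σ → υ} {g : τ → υ}
    (h : Function.Injective (Sum.elim f g)) :
    Function.Injective
      (productMap (MvPolynomial.rename f : MvPolynomial σ k →ₐ[k] _) (MvPolynomial.rename g)) := by
  have hcomp :
      productMap (MvPolynomial.rename f : MvPolynomial σ k →ₐ[k] _) (MvPolynomial.rename g) =
      (MvPolynomial.rename (Sum.elim f g)).comp (MvPolynomial.tensorEquivSum k σ τ k).toAlgHom := by
    ext <;> simp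
  rw [hcomp]
  exact (MvPolynomial.rename_injective _ h).comp (MvPolynomial.tensorEquivSum k σ τ k).injective

theorem range_mapIncl_inf_range_mapIncl_le {k V W : Type*} [Field k] [AddCommGroup V] [Module k V]
    [AddCommGroup W] [Module k W] (S : Submodule k V) (T : Submodule k W) :
    LinearMap.range (mapIncl S ⊤) ⊓ LinearMap.range (mapIncl ⊤ T) ≤
      LinearMap.range (mapIncl S T) := by
  obtain ⟨p, hp⟩ := S.subtype.exists_leftInverse_of_injective S.ker_subtype
  obtain ⟨q, hq⟩ := T.subtype.exists_leftInverse_of_injective T.ker_subtype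
  have hfix₁ : LinearMap.rTensor W (S.subtype ∘ₗ p) ∘ₗ mapIncl S ⊤ = mapIncl S ⊤ := by
    rw [LinearMap.rTensor, mapIncl, ← TensorProduct.map_comp, LinearMap.comp_assoc, hp]
    rfl
  have hfix₂ : LinearMap.lTensor V (T.subtype ∘ₗ q) ∘ₗ mapIncl ⊤ T = mapIncl ⊤ T := by
    rw [LinearMap.lTensor, mapIncl, ← TensorProduct.map_comp, LinearMap.comp_assoc, hq]
    rfl
  rintro w ⟨⟨w₁, hw₁⟩, ⟨w₂, hw₂⟩⟩
  have hproj : mapIncl S T ∘ₗ TensorProduct.map p q =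
      LinearMap.rTensor W (S.subtype ∘ₗ p) ∘ₗ LinearMap.lTensor V (T.subtype ∘ₗ q) := by
    rw [LinearMap.rTensor_comp_lTensor, mapIncl, TensorProduct.map_comp]
  refine ⟨TensorProduct.map p q w, ?_⟩
  calc mapIncl S T (TensorProduct.map p q w)
      = LinearMap.rTensor W (S.subtype ∘ₗ p) (LinearMap.lTensor V (T.subtype ∘ₗ q) w) :=
        LinearMap.congr_fun hproj w
    _ = LinearMap.rTensor W (S.subtype ∘ₗ p) w :=
        congrArg _ (hw₂ ▸ LinearMap.congr_fun hfix₂ w₂)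
    _ = w := hw₁ ▸ LinearMap.congr_fun hfix₁ w₁

section ExternalProduct

variable {k : Type} [Field k] {m r l : ℕ} {x : Fin m ↪ Fin l} {y : Fin r ↪ Fin l}
  (S : Submodule k (RF k m)) (T : Submodule k (RF k r))

omit S T in
theorem productMap_embAlgHom_injective (hxy : Disjoint (Set.range x) (Set.range y)) :
    Function.Injective (productMap (embAlgHom (k := k) x) (embAlgHom y)) := by
  refine productMap_injective_of_isLocalization (nonZeroDivisors (MvPolynomial (Fin m) k))
    (nonZeroDivisors (MvPolynomial (Fin r) k)) ?_
  have hcomp : productMap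
        ((embAlgHom x).comp (IsScalarTower.toAlgHom k (MvPolynomial (Fin m) k) (RF k m)))
        ((embAlgHom y).comp (IsScalarTower.toAlgHom k (MvPolynomial (Fin r) k) (RF k r))) =
      (IsScalarTower.toAlgHom k (MvPolynomial (Fin l) k) (RF k l)).comp
        (productMap (MvPolynomial.rename x) (MvPolynomial.rename y)) := by
    ext <;> simp
  rw [hcomp]
  exact (IsFractionRing.injective _ _).comp <| productMap_rename_injective <|
    x.injective.sumElim y.injective fun i j => Set.disjoint_range_iff.1 hxy i j

theorem externalProduct_eq_range : externalProduct x y S T =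
    LinearMap.range ((productMap (embAlgHom x) (embAlgHom y)).toLinearMap ∘ₗ mapIncl S T) := by
  rw [LinearMap.range_comp, range_mapIncl, Submodule.map_map₂, externalProduct,
    Submodule.mul_eq_map₂, Submodule.map₂_map_map]
  rfl

variable {S T} in
theorem exists_eq_sum_of_mem_externalProduct {w : RF k l} (hw : w ∈ externalProduct x y S T) :
    ∃ (N : ℕ) (p : Fin N → RF k m) (q : Fin N → RF k r), (∀ i, p i ∈ S) ∧ (∀ i, q i ∈ T) ∧
      w = ∑ i, embMap x x.injective (p i) * embMap y y.injective (q i) := by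
  rw [externalProduct_eq_range] at hw
  obtain ⟨t, rfl⟩ := hw
  obtain ⟨N, p, q, rfl⟩ := exists_sum_tmul_eq t
  exact ⟨N, fun i => p i, fun i => q i, fun i => (p i).2, fun i => (q i).2, by simp⟩

variable {S T} in
theorem externalProduct_top_inf_externalProduct_top (hxy : Disjoint (Set.range x) (Set.range y)) :
    externalProduct x y ⊤ T ⊓ externalProduct x y S ⊤ ≤ externalProduct x y S T := by
  simp only [externalProduct_eq_range, LinearMap.range_comp]
  rw [inf_comm, ← Submodule.map_inf (productMap (embAlgHom x) (embAlgHom y)).toLinearMap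
    (productMap_embAlgHom_injective hxy)]
  exact Submodule.map_mono (range_mapIncl_inf_range_mapIncl_le S T)

end ExternalProduct

end LinearDisjointness

section Splitting

variable {k : Type} [Field k] {m r l : ℕ}

theorem coeff_shift_indicator_mem_externalProduct [CharZero k] {G : Type*}
    {Ω : ∀ l : ℕ, (Fin l → G) → Submodule k (RF k l)} (hΩPhi : ∀ l a, ∀ α ∈ Ω l a, α ∈ Phi k l)
    (hΩperm : ∀ (l : ℕ) (a : Fin l → G) (σ : Equiv.Perm (Fin l)) (α : RF k l),
      permHom σ α ∈ Ω l a ↔ α ∈ Ω l (a ∘ σ))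
    (hΩ : ∀ l a, ∀ α ∈ Ω (l + 1) a, ∀ n, (expandAtInfty k l α).coeff n ∈ Ω l (a ∘ Fin.succ))
    {δ : Derivation k (RF k l) (RF k l)} (hδ : ∀ i, δ (zv i) = 1) {a : Fin l → G}
    (hΩδ : ∀ α ∈ Ω l a, δ α ∈ Ω l a) {x : Fin m ↪ Fin l} {y : Fin r ↪ Fin l}
    (hxy : IsCompl (Set.range x) (Set.range y)) {α : RF k l} (hα : α ∈ Ω l a) (n : ℤ) :
    (shift ((Set.range x).indicator 1) α).coeff n ∈
      externalProduct x y (Ω m (a ∘ x)) (Ω r (a ∘ y)) := by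
  set v : Fin l → k := (Set.range x).indicator 1
  have hvx (i : Fin m) : v (x i) = 1 := Set.indicator_of_mem (Set.mem_range_self i) 1
  have hvy (j : Fin r) : v (y j) = 0 :=
    Set.indicator_of_notMem (Set.disjoint_right.1 hxy.disjoint (Set.mem_range_self j)) 1
  have hright : (shift v α).coeff n ∈ externalProduct x y ⊤ (Ω r (a ∘ y)) :=
    coeff_shift_mem_externalProduct_top hΩPhi hΩperm hΩ hxy (by simp [hvx]) hvy hα n
  have hbackward (β : RF k l) (hβ : β ∈ Ω l a) (j : ℤ) :
      (shift (v - 1) β).coeff j ∈ externalProduct x y (Ω m (a ∘ x)) ⊤ := by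
    rw [externalProduct, mul_comm]
    exact coeff_shift_mem_externalProduct_top hΩPhi hΩperm hΩ hxy.symm (by simp [hvy])
      (by simp [hvx]) hβ j
  have hleft : (shift v α).coeff n ∈ externalProduct x y (Ω m (a ∘ x)) ⊤ := by
    simpa using coeff_shift_add_one_mem hδ (hΩPhi l a) hΩδ hbackward hα n
  exact externalProduct_top_inf_externalProduct_top hxy.disjoint ⟨hright, hleft⟩

/-- The embedding `s ↦ K + s` of `Fin (l - K)` onto the last `l - K` elements of `Fin l`. -/
def natAddLEEmb {K : ℕ} (hK : K ≤ l) : Fin (l - K) ↪ Fin l where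
  toFun s := ⟨K + s, by omega⟩
  inj' s t hst := Fin.ext (by simpa using hst)

theorem isCompl_range_castLEEmb_range_natAddLEEmb {K : ℕ} (hK : K ≤ l) :
    IsCompl (Set.range (Fin.castLEEmb hK)) (Set.range (natAddLEEmb hK)) := by
  have hrange : Set.range (natAddLEEmb hK) = (Set.range (Fin.castLEEmb hK))ᶜ := by
    ext i
    rw [Fin.coe_castLEEmb, Fin.range_castLE]
    refine ⟨?_, fun hi =>
      ⟨⟨i - K, Nat.sub_lt_sub_right (not_lt.1 hi) i.isLt⟩,
        Fin.ext (Nat.add_sub_of_le (not_lt.1 hi))⟩⟩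
    rintro ⟨s, rfl⟩
    exact not_lt.2 (Nat.le_add_right K s)
  exact hrange ▸ isCompl_compl

theorem coe_sum_eq_Delta (D : Fin l → Derivation k (RF k l) (RF k l)) :
    ⇑(∑ i, D i) = Delta D := by
  ext α
  rw [← Derivation.coeFnAddMonoidHom_apply, map_sum, Finset.sum_apply]
  rfl

theorem IsPartialDeriv.Delta_zv {D : Fin l → Derivation k (RF k l) (RF k l)}
    (hD : IsPartialDeriv D) (i : Fin l) : Delta D (zv i) = 1 := by
  simp [Delta, hD _ _]

theorem exists_forall_lt_lcoeff_eq_zero {L : Type} [Field L] (f : RatFunc L) :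
    ∃ n₀ : ℤ, ∀ n < n₀, lcoeff n f = 0 :=
  ⟨(f : LaurentSeries L).order, fun _ => HahnSeries.coeff_eq_zero_of_lt_order⟩

end Splitting

theorem statement18_general {k : Type} [Field k] [CharZero k] {G : Type*}
    {D : ∀ l : ℕ, Fin l → Derivation k (RF k l) (RF k l)} (hD : ∀ l, IsPartialDeriv (D l))
    {Ω : ∀ l : ℕ, (Fin l → G) → Submodule k (RF k l)} (hΩPhi : ∀ l a, ∀ α ∈ Ω l a, α ∈ Phi k l)
    (hΩ2 : ∀ (l : ℕ) (a : Fin l → G) (σ : Equiv.Perm (Fin l)) (α : RF k l),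
      permHom σ α ∈ Ω l a ↔ α ∈ Ω l (a ∘ σ))
    (hΩ3 : ∀ l a, ∀ α ∈ Ω l a, Delta (D l) α ∈ Ω l a)
    {E : ∀ l : ℕ, RF k (l + 1) →+* RatFunc (RF k (l + 1))}
    (hE0 : ∀ l, E l (zv 0) = RatFunc.X⁻¹)
    (hE1 : ∀ (l : ℕ) (s : Fin l), E l (zv s.succ) = RatFunc.C (zv (k := k) s.succ))
    (hEc : ∀ (l : ℕ) (c : k), E l (algebraMap k _ c) = RatFunc.C (algebraMap k _ c))
    (hΩ4 : ∀ (l : ℕ) (a : Fin (l + 1) → G), ∀ α ∈ Ω (l + 1) a, ∀ n : ℤ,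
      ∃ β ∈ Ω l (a ∘ Fin.succ),
        lcoeff (n + 1) (E l α) = embMap Fin.succ (Fin.succ_injective l) β)
    {SH : ∀ l : ℕ, ℕ → (RF k l →+* RatFunc (RF k l))}
    (hSH : ∀ (l K : ℕ) (s : Fin l), SH l K (zv s) =
      if (s : ℕ) < K then RatFunc.C (zv (k := k) s) + RatFunc.X⁻¹
      else RatFunc.C (zv (k := k) s))
    (hSHc : ∀ (l K : ℕ) (c : k), SH l K (algebraMap k _ c) = RatFunc.C (algebraMap k _ c))
    {l : ℕ} {a : Fin l → G} {K : ℕ} (hK : K ≤ l) {α : RF k l} (hα : α ∈ Ω l a) :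
    (∃ n₀ : ℤ, ∀ n : ℤ, n < n₀ → lcoeff (n + 1) (SH l K α) = 0) ∧
      ∀ n : ℤ, ∃ (N : ℕ) (p : Fin N → RF k K) (q : Fin N → RF k (l - K)),
        (∀ i, p i ∈ Ω K (fun s => a (Fin.castLE hK s))) ∧
        (∀ i, q i ∈ Ω (l - K) (fun s => a ⟨K + s, by omega⟩)) ∧
        lcoeff (n + 1) (SH l K α) =
          ∑ i, embMap (Fin.castLE hK) (Fin.castLE_injective hK) (p i) *
            embMap (fun s : Fin (l - K) => (⟨K + s, by omega⟩ : Fin l))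
              (fun s t hst => Fin.ext (by simpa using hst)) (q i) := by
  have hΩ (l : ℕ) (a : Fin (l + 1) → G) (α) (hα : α ∈ Ω (l + 1) a) (n : ℤ) :
      (expandAtInfty k l α).coeff n ∈ Ω l (a ∘ Fin.succ) := by
    obtain ⟨β, hβ, h⟩ := hΩ4 l a α hα (n - 1)
    rw [lcoeff_eq_embMap_coeff_expandAtInfty (hE0 l) (hE1 l) (hEc l), sub_add_cancel] at h
    rwa [(embMap Fin.succ (Fin.succ_injective l)).injective h]
  refine ⟨?_, fun n => ?_⟩
  · obtain ⟨n₀, hn₀⟩ := exists_forall_lt_lcoeff_eq_zero (SH l K α)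
    exact ⟨n₀ - 1, fun n hn => hn₀ _ (by omega)⟩
  · have hmem : (shift ((Set.range (Fin.castLEEmb hK)).indicator 1) α).coeff (n + 1) ∈
        externalProduct (Fin.castLEEmb hK) (natAddLEEmb hK) (Ω K (a ∘ Fin.castLEEmb hK))
          (Ω (l - K) (a ∘ natAddLEEmb hK)) :=
      coeff_shift_indicator_mem_externalProduct hΩPhi hΩ2 hΩ
        (coe_sum_eq_Delta (D l) ▸ (hD l).Delta_zv) (coe_sum_eq_Delta (D l) ▸ hΩ3 l a)
        (isCompl_range_castLEEmb_range_natAddLEEmb hK) hα (n + 1)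
    rw [lcoeff_eq_coeff_shift (J := Set.range (Fin.castLEEmb hK)) (by simp [hSH]) (hSHc l K)]
    obtain ⟨N, p, q, hp, hq, hsum⟩ := exists_eq_sum_of_mem_externalProduct hmem
    exact ⟨N, p, q, hp, hq, hsum⟩

/-- assume given `deg : G → ℤ`, a symmetric `loc : G × G → ℤ`, and
for every finite tuple `a` of elements of `G` a subspace `Ω^a ⊆ Φ^l` satisfying
(Ω0)–(Ω4).  Then for every `1 ≤ K ≤ l` and `α ∈ Ω^{(a₁,…,a_l)}`, the expansion of
`α(z₁+z,…,z_K+z, z_{K+1},…,z_l)` at `z = ∞` has the form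
`Σ_{n≥n₀} z^{-n-1} Σᵢ α'_{ni}(z₁,…,z_K)·α''_{ni}(z_{K+1},…,z_l)` with finitely many
terms for each `n`, where `α'_{ni} ∈ Ω^{(a₁,…,a_K)}` and
`α''_{ni} ∈ Ω^{(a_{K+1},…,a_l)}`.  Here `E l` is the substitution `z₁ ↦ z⁻¹`
(expansion at `z₁ = ∞`) used to state (Ω4), and `SH l K` is the substitution
`z_s ↦ z_s + z⁻¹` for `s ≤ K` (expansion of the shifted function at `z = ∞`). -/
theorem statement18 {k : Type} [Field k] [CharZero k]
    (G : Type) (degG : G → ℤ) (locG : G → G → ℤ)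
    (hloc : ∀ a b, locG a b = locG b a)
    (D : ∀ l : ℕ, Fin l → Derivation k (RF k l) (RF k l))
    (hD : ∀ l, IsPartialDeriv (D l))
    (Ω : ∀ l : ℕ, (Fin l → G) → Submodule k (RF k l))
    (hΩPhi : ∀ (l : ℕ) (a : Fin l → G), ∀ α ∈ Ω l a, α ∈ Phi k l)
    -- (Ω0)
    (hΩ00 : ∀ a : Fin 0 → G, Ω 0 a = ⊤)
    (hΩ01 : ∀ a : Fin 1 → G,
      Ω 1 a = Subalgebra.toSubmodule (Algebra.adjoin k {zv (0 : Fin 1)}))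
    -- (Ω1)
    (hΩ1 : ∀ (l : ℕ) (a : Fin l → G), ∀ α ∈ Ω l a, ∀ i j : Fin l, i < j →
      ∀ m : ℤ, m < -(locG (a i) (a j)) → rho i j m α = 0)
    -- (Ω2)
    (hΩ2 : ∀ (l : ℕ) (a : Fin l → G) (σ : Equiv.Perm (Fin l)) (α : RF k l),
      permHom σ α ∈ Ω l a ↔ α ∈ Ω l (a ∘ σ))
    -- (Ω3)
    (hΩ3 : ∀ (l : ℕ) (a : Fin l → G), ∀ α ∈ Ω l a,
      Delta (D l) α ∈ Ω l a ∧
      DeltaStar (D l) (fun i => 2 * degG (a i)) α ∈ Ω l a)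
    -- the substitution `z₁ ↦ z⁻¹`, giving the expansion at `z₁ = ∞`
    (E : ∀ l : ℕ, RF k (l + 1) →+* RatFunc (RF k (l + 1)))
    (hE0 : ∀ l : ℕ, (E l) (zv (0 : Fin (l + 1))) = (RatFunc.X : RatFunc (RF k (l + 1)))⁻¹)
    (hE1 : ∀ (l : ℕ) (s : Fin l), (E l) (zv s.succ) = RatFunc.C (zv (k := k) s.succ))
    (hEc : ∀ (l : ℕ) (c : k),
      (E l) (algebraMap k (RF k (l + 1)) c) = RatFunc.C (algebraMap k (RF k (l + 1)) c))
    -- (Ω4)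
    (hΩ4 : ∀ (l : ℕ) (a : Fin (l + 1) → G), ∀ α ∈ Ω (l + 1) a, ∀ n : ℤ,
      ∃ β ∈ Ω l (a ∘ Fin.succ),
        lcoeff (n + 1) (E l α) = embMap Fin.succ (Fin.succ_injective l) β)
    -- the substitution `z_s ↦ z_s + z⁻¹` for `s < K`
    (SH : ∀ l K : ℕ, RF k l →+* RatFunc (RF k l))
    (hSH : ∀ (l K : ℕ) (s : Fin l), (SH l K) (zv s) =
      if (s : ℕ) < K then RatFunc.C (zv (k := k) s) + (RatFunc.X : RatFunc (RF k l))⁻¹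
      else RatFunc.C (zv (k := k) s))
    (hSHc : ∀ (l K : ℕ) (c : k),
      (SH l K) (algebraMap k (RF k l) c) = RatFunc.C (algebraMap k (RF k l) c)) :
    -- conclusion (Ω5)
    ∀ (l : ℕ) (a : Fin l → G) (K : ℕ) (hK1 : 1 ≤ K) (hK : K ≤ l), ∀ α ∈ Ω l a,
      (∃ n₀ : ℤ, ∀ n : ℤ, n < n₀ → lcoeff (n + 1) (SH l K α) = 0) ∧
      ∀ n : ℤ, ∃ (N : ℕ) (p : Fin N → RF k K) (q : Fin N → RF k (l - K)),
        (∀ i, p i ∈ Ω K (fun s => a (Fin.castLE hK s))) ∧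
        (∀ i, q i ∈ Ω (l - K)
          (fun s => a ⟨K + (s : ℕ), by have := s.isLt; omega⟩)) ∧
        lcoeff (n + 1) (SH l K α) =
          ∑ i, embMap (Fin.castLE hK) (Fin.castLE_injective hK) (p i) *
            embMap (fun s : Fin (l - K) =>
                (⟨K + (s : ℕ), by have := s.isLt; omega⟩ : Fin l))
              (fun s t hst => by
                have h : K + (s : ℕ) = K + (t : ℕ) := congrArg Fin.val hst
                exact Fin.ext (by omega)) (q i) := by
  exact fun l a K _ hK α hα => statement18_general hD hΩPhi hΩ2 (fun l a α hα => (hΩ3 l a α hα).1)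
    hE0 hE1 hEc hΩ4 hSH hSHc hK hα

end Griess
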